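/- Let 1 ≤ r < ∞ and let W be a graphon whose randomness support graphon 1_{rand(W)} is K_{r+1}-free. Then Ent(W) ≤ 1 - 1/r, with equality if and only if there exists a graphon W' ∈ R_r with δ_□(W, W') = 0. -/

import Mathlib

open MeasureTheory Set Filter

noncomputable section

/-- A graphon: a symmetric measurable function `ℝ → ℝ → ℝ` with values in `[0,1]`
(only its values on `[0,1]²` matter). -/
def IsGraphon (W : ℝ → ℝ → ℝ) : Prop :=
  (∀ x y, W x y = W y x) ∧ Measurable (Function.uncurry W) ∧
    ∀ x y, W x y ∈ Set.Icc (0 : ℝ) 1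

/-- The cut norm `‖U‖_□`, the supremum over measurable `S, T ⊆ [0,1]` of
`|∫_{S×T} U|`. -/
def cutNorm (U : ℝ → ℝ → ℝ) : ℝ :=
  sSup { r : ℝ | ∃ S T : Set ℝ, MeasurableSet S ∧ MeasurableSet T ∧
    S ⊆ Set.Icc 0 1 ∧ T ⊆ Set.Icc 0 1 ∧
    r = |∫ p in S ×ˢ T, U p.1 p.2| }

/-- `d_□(W₁, W₂) = ‖W₁ - W₂‖_□`. -/
def dCut (W₁ W₂ : ℝ → ℝ → ℝ) : ℝ := cutNorm (fun x y => W₁ x y - W₂ x y)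

/-- A Lebesgue-measure-preserving map `[0,1] → [0,1]`. -/
def IsMPSelf (σ : ℝ → ℝ) : Prop :=
  MeasureTheory.MeasurePreserving σ
      (MeasureTheory.volume.restrict (Set.Icc (0:ℝ) 1))
      (MeasureTheory.volume.restrict (Set.Icc (0:ℝ) 1)) ∧
    Set.MapsTo σ (Set.Icc (0:ℝ) 1) (Set.Icc (0:ℝ) 1)

/-- The cut distance `δ_□(W₁, W₂)`. -/
def deltaCut (W₁ W₂ : ℝ → ℝ → ℝ) : ℝ :=
  sInf { r : ℝ | ∃ σ₁ σ₂ : ℝ → ℝ, IsMPSelf σ₁ ∧ IsMPSelf σ₂ ∧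
    r = cutNorm (fun x y => W₁ (σ₁ x) (σ₁ y) - W₂ (σ₂ x) (σ₂ y)) }

/-- The binary entropy function `h` (base-2 logarithm; `logb 2 0 = 0` by convention,
so `h 0 = h 1 = 0`). -/
def binEnt (x : ℝ) : ℝ := -x * Real.logb 2 x - (1 - x) * Real.logb 2 (1 - x)

/-- `h̃ x = h (min x (1/2))`. -/
def htilde (x : ℝ) : ℝ := binEnt (min x (1/2))

/-- The entropy `Ent(W) = ∫₀¹∫₀¹ h(W(x,y)) dx dy` of a graphon. -/
def graphonEnt (W : ℝ → ℝ → ℝ) : ℝ :=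
  ∫ x in Set.Icc (0:ℝ) 1, ∫ y in Set.Icc (0:ℝ) 1, binEnt (W x y)

open Classical in
/-- The graphon `W_G` of a simple graph `G` on `{1, …, n}` (vertices as `Fin n`,
vertex `i : Fin n` representing `i+1`): `W_G x y = 1` iff `⌈nx⌉⌈ny⌉ ∈ E(G)`. -/
def graphonOfGraph {n : ℕ} (G : SimpleGraph (Fin n)) : ℝ → ℝ → ℝ := fun x y =>
  if ∃ i j : Fin n, G.Adj i j ∧ ⌈(n : ℝ) * x⌉ = ((i : ℕ) : ℤ) + 1 ∧
      ⌈(n : ℝ) * y⌉ = ((j : ℕ) : ℤ) + 1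
  then 1 else 0

/-- A labelled graph class: a set of graphs on `{1,…,n}` for each `n`. -/
abbrev GraphClass := ∀ n : ℕ, Set (SimpleGraph (Fin n))

/-- A graph class is closed under relabelling by permutations. -/
def IsGraphClass (Q : GraphClass) : Prop :=
  ∀ (n : ℕ) (π : Equiv.Perm (Fin n)) (G : SimpleGraph (Fin n)),
    G ∈ Q n → G.comap ⇑π ∈ Q n

/-- A hereditary graph class: a graph class closed under taking induced subgraphs
(relabelled by the order-preserving bijection). -/
def IsHereditary (Q : GraphClass) : Prop :=
  IsGraphClass Q ∧
    ∀ (m n : ℕ) (f : Fin m → Fin n), StrictMono f →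
      ∀ G ∈ Q n, G.comap f ∈ Q m

/-- `Q̂`: the set of graphons which are limits (in cut distance) of sequences of graphs in
the class `Q` whose orders tend to infinity. -/
def limitSet (Q : GraphClass) : Set (ℝ → ℝ → ℝ) :=
  { W | IsGraphon W ∧
    ∃ (nk : ℕ → ℕ) (Gk : ∀ k, SimpleGraph (Fin (nk k))),
      (∀ k, Gk k ∈ Q (nk k)) ∧ Filter.Tendsto nk Filter.atTop Filter.atTop ∧
      Filter.Tendsto (fun k => deltaCut (graphonOfGraph (Gk k)) W) Filter.atTop (nhds 0) }

/-- `C(n,2) = n(n-1)/2` as a real number. -/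
def choose2 (n : ℕ) : ℝ := (n : ℝ) * ((n : ℝ) - 1) / 2

open Classical in
/-- The step function `E[W | P]` obtained by averaging `W` over the products of the
parts of the partition `P` of `[0,1]`. -/
def condExpPart {k : ℕ} (P : Fin k → Set ℝ) (W : ℝ → ℝ → ℝ) : ℝ → ℝ → ℝ := fun x y =>
  ∑ i : Fin k, ∑ j : Fin k,
    if x ∈ P i ∧ y ∈ P j then ⨍ p in (P i) ×ˢ (P j), W p.1 p.2 else 0

/-- `W̄_n`: the step function of `W` for the partition of `[0,1]` into `n` consecutive
intervals of length `1/n`. -/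
def barStep (n : ℕ) (W : ℝ → ℝ → ℝ) : ℝ → ℝ → ℝ :=
  condExpPart (fun i : Fin n => Set.Ioc (((i : ℕ) : ℝ)/n) ((((i : ℕ) : ℝ) + 1)/n)) W

/-- `N̂_□(n, δ; W)`: the number of graphs `G` on `{1,…,n}` with `d_□(W_G, W) ≤ δ`. -/
def NhatCut (n : ℕ) (δ : ℝ) (W : ℝ → ℝ → ℝ) : ℕ :=
  Nat.card {G : SimpleGraph (Fin n) // dCut (graphonOfGraph G) W ≤ δ}

/-- `N_□(n, δ; W)`: the number of graphs `G` on `{1,…,n}` with `δ_□(W_G, W) ≤ δ`. -/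
def NCut (n : ℕ) (δ : ℝ) (W : ℝ → ℝ → ℝ) : ℕ :=
  Nat.card {G : SimpleGraph (Fin n) // deltaCut (graphonOfGraph G) W ≤ δ}

open Classical in
/-- The induced density `p(F; W)` of a graph `F` on `{1,…,k}` in a graphon `W`. -/
def inducedDensity {k : ℕ} (F : SimpleGraph (Fin k)) (W : ℝ → ℝ → ℝ) : ℝ :=
  ∫ x : Fin k → ℝ in Set.univ.pi (fun _ : Fin k => Set.Icc (0:ℝ) 1),
    ∏ i : Fin k, ∏ j : Fin k,
      if i < j then (if F.Adj i j then W (x i) (x j) else 1 - W (x i) (x j)) else 1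

open Classical in
/-- The randomness support graphon `1_{rand(W)}` of `W`. -/
def randIndicator (W : ℝ → ℝ → ℝ) : ℝ → ℝ → ℝ := fun x y =>
  if 0 < W x y ∧ W x y < 1 then 1 else 0

/-- A kernel `U` is `K_r`-free if `∏_{i<j} U(x_i, x_j) = 0` for a.e. `x ∈ [0,1]^r`. -/
def KFree (r : ℕ) (U : ℝ → ℝ → ℝ) : Prop :=
  ∀ᵐ x ∂(MeasureTheory.volume.restrict (Set.univ.pi fun _ : Fin r => Set.Icc (0:ℝ) 1)),
    (∏ i : Fin r, ∏ j : Fin r, if i < j then U (x i) (x j) else 1) = 0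

open Classical in
/-- The graphon `W^{(r,s)}`: equal to `1/2` off the diagonal blocks, `1` on the first `s`
diagonal blocks `I_i × I_i`, and `0` on the remaining diagonal blocks. -/
def Wrs (r s : ℕ) : ℝ → ℝ → ℝ := fun x y =>
  if ∃ i j : Fin r, i ≠ j ∧ x ∈ Set.Ioc (((i:ℕ):ℝ)/r) ((((i:ℕ):ℝ)+1)/r) ∧
      y ∈ Set.Ioc (((j:ℕ):ℝ)/r) ((((j:ℕ):ℝ)+1)/r)
  then 1/2
  else if ∃ i : Fin r, (i:ℕ) < s ∧ x ∈ Set.Ioc (((i:ℕ):ℝ)/r) ((((i:ℕ):ℝ)+1)/r) ∧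
      y ∈ Set.Ioc (((i:ℕ):ℝ)/r) ((((i:ℕ):ℝ)+1)/r)
  then 1 else 0

/-- `E_r = ⋃_{i ≠ j} I_i × I_j` where `I_i`, `i = 1, …, r`, are the consecutive
intervals of length `1/r` in `[0,1]`. -/
def Er (r : ℕ) : Set (ℝ × ℝ) :=
  ⋃ (i : Fin r) (j : Fin r) (_ : i ≠ j),
    (Set.Ioc (((i:ℕ):ℝ)/r) ((((i:ℕ):ℝ)+1)/r)) ×ˢ (Set.Ioc (((j:ℕ):ℝ)/r) ((((j:ℕ):ℝ)+1)/r))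

/-- `R_r`: the set of graphons equal to `1/2` on `E_r` and `{0,1}`-valued elsewhere
on `[0,1]²`. -/
def Rset (r : ℕ) : Set (ℝ → ℝ → ℝ) :=
  { W | IsGraphon W ∧ (∀ p ∈ Er r, W p.1 p.2 = 1/2) ∧
      ∀ p ∈ ((Set.Icc (0:ℝ) 1) ×ˢ (Set.Icc (0:ℝ) 1)) \ Er r,
        W p.1 p.2 = 0 ∨ W p.1 p.2 = 1 }

/-- A graphon is random-free if it is `{0,1}`-valued a.e. on `[0,1]²`. -/
def IsRandomFree (W : ℝ → ℝ → ℝ) : Prop :=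
  ∀ᵐ p ∂(MeasureTheory.volume.restrict ((Set.Icc (0:ℝ) 1) ×ˢ (Set.Icc (0:ℝ) 1))),
    W (Prod.fst p) (Prod.snd p) = 0 ∨ W (Prod.fst p) (Prod.snd p) = 1

/-!
Since `h ≤ 1` on `(0,1)` and `h(0) = h(1) = 0`, the entropy of `W` is at most the measure of
`rand(W)`, with equality only if `W = 1/2` almost everywhere on `rand(W)`. Turán's theorem for
measurable graphs bounds that measure by `1 - 1/r`: apply induction inside the neighbourhood of
each point and combine the bounds through Goodman's identity. In the extremal case almost all
degrees agree and almost no point is adjacent to neither end of an edge, so the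
non-neighbourhoods of the vertices of an `r`-clique partition the space into `r` equal classes,
and `rand(W)` is complete `r`-partite. Rearranging the classes onto the intervals `I_i` yields `W'`.

For the converse, `q(x) = 4x(1-x)` satisfies the same bound and has the same extremal graphons as
`h`. Since `q` is concave, `∫ q(W') ≤ ∫ q(W) - ∫ q'(W)(W - W')` after any rearrangement of both
graphons. Along rearrangements with `‖W - W'‖_□ → 0` the last integral tends to `0`, as cut-norm
convergence controls rectangles and hence all integrable weights. So `δ_□(W, W') = 0` gives
`∫ q(W) ≥ ∫ q(W') = 1 - 1/r`.
-/

section Measure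

variable {Ω : Type*} [MeasurableSpace Ω] {μ : Measure Ω}

theorem exists_measurable_ae_mem_iff {ι : Type*} [Countable ι] [Nonempty ι] [MeasurableSpace ι]
    {A : ι → Set Ω} (hA : ∀ i, MeasurableSet (A i))
    (hdisj : Pairwise (Function.onFun (AEDisjoint μ) A)) (hcover : ∀ᵐ z ∂μ, ∃ i, z ∈ A i) :
    ∃ c : Ω → ι, Measurable c ∧ ∀ᵐ z ∂μ, ∀ i, z ∈ A i ↔ c z = i := by
  obtain ⟨t, ht, ht0, htdisj⟩ := exists_null_pairwise_disjoint_sdiff hdisj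
  obtain ⟨c, hc, hcA⟩ := exists_measurable_piecewise (fun i => A i \ t i)
    (fun i => (hA i).diff (ht i)) (fun i _ => i) (fun i => measurable_const)
    fun i j hij z hz => ((htdisj hij).le_bot hz).elim
  refine ⟨c, hc, ?_⟩
  have hnot : ∀ᵐ z ∂μ, ∀ i, z ∉ t i := ae_all_iff.2 fun i =>
    measure_eq_zero_iff_ae_notMem.1 (ht0 i)
  filter_upwards [hcover, hnot] with z ⟨j, hj⟩ hz i
  have hmem : ∀ {i}, z ∈ A i → c z = i := fun {i} hi => hcA i ⟨hi, hz i⟩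
  exact ⟨hmem, fun hi => by rwa [← hi, hmem hj]⟩

section FiniteMeasure

variable [IsFiniteMeasure μ]

theorem integral_sub_const_sq {f : Ω → ℝ} (hf : MemLp f 2 μ) (c : ℝ) :
    ∫ x, (f x - c) ^ 2 ∂μ = ∫ x, f x ^ 2 ∂μ - 2 * c * ∫ x, f x ∂μ + c ^ 2 * μ.real univ := by
  have hf1 : Integrable f μ := hf.integrable one_le_two
  have hexpand : ∀ x, (f x - c) ^ 2 = f x ^ 2 - 2 * c * f x + c ^ 2 := fun x => by ring
  simp only [hexpand]
  rw [integral_add (by exact hf.integrable_sq.sub (hf1.const_mul _)) (integrable_const _),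
    integral_sub hf.integrable_sq (hf1.const_mul _), integral_const_mul, integral_const,
    smul_eq_mul, mul_comm (μ.real univ)]

theorem sq_integral_le {f : Ω → ℝ} (hf : MemLp f 2 μ) :
    (∫ x, f x ∂μ) ^ 2 ≤ μ.real univ * ∫ x, f x ^ 2 ∂μ := by
  rcases eq_or_ne (μ.real univ) 0 with hμ | hμ
  · have : μ = 0 := by simpa [measureReal_eq_zero_iff] using hμ
    simp [this]
  have hpos : 0 < μ.real univ := lt_of_le_of_ne measureReal_nonneg hμ.symm
  have hvar : 0 ≤ ∫ x, (f x - (∫ y, f y ∂μ) / μ.real univ) ^ 2 ∂μ :=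
    integral_nonneg fun x => sq_nonneg _
  rw [integral_sub_const_sq hf] at hvar
  field_simp at hvar
  linarith

end FiniteMeasure

section ProbabilityMeasure

variable [IsProbabilityMeasure μ]

theorem ae_pi_of_ae_prod {ι : Type*} [Fintype ι] {Q : Ω → Ω → Prop}
    (h : ∀ᵐ q ∂(μ.prod μ), Q q.1 q.2) :
    ∀ᵐ x ∂(Measure.pi fun _ : ι => μ), Pairwise fun i j => Q (x i) (x j) := by
  have hindep : ProbabilityTheory.iIndepFun (fun (i : ι) (x : ι → Ω) => x i)
      (Measure.pi fun _ => μ) :=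
    ProbabilityTheory.iIndepFun_pi (X := fun _ => id) fun _ => aemeasurable_id
  simp only [Pairwise, eventually_all]
  intro i j hij
  have hpair := (ProbabilityTheory.indepFun_iff_map_prod_eq_prod_map_map
    (measurable_pi_apply i).aemeasurable (measurable_pi_apply j).aemeasurable).1
    (hindep.indepFun hij)
  rw [(measurePreserving_eval (fun _ : ι => μ) i).map_eq,
    (measurePreserving_eval (fun _ : ι => μ) j).map_eq] at hpair
  rw [← hpair] at h
  exact ae_of_ae_map ((measurable_pi_apply i).prodMk (measurable_pi_apply j)).aemeasurable h

theorem ae_exists_mem_of_sum_eq_one {ι : Type*} [Fintype ι] {A : ι → Set Ω}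
    (hA : ∀ i, MeasurableSet (A i)) (hdisj : Pairwise (Function.onFun (AEDisjoint μ) A))
    (hsum : ∑ i, μ.real (A i) = 1) : ∀ᵐ z ∂μ, ∃ i, z ∈ A i := by
  have hone : μ (⋃ i, A i) = 1 := by
    rw [measure_iUnion₀ hdisj fun i => (hA i).nullMeasurableSet, tsum_fintype,
      ← ENNReal.toReal_eq_one_iff, ENNReal.toReal_sum fun i _ => measure_ne_top μ _]
    exact hsum
  filter_upwards [(mem_ae_iff_prob_eq_one (MeasurableSet.iUnion hA)).2 hone] with z hz
  exact mem_iUnion.1 hz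

end ProbabilityMeasure

end Measure

/-- A graph on a measurable space, given by its adjacency relation; loops are allowed. -/
structure IsMeasurableGraph {Ω : Type*} [MeasurableSpace Ω] (G : Ω → Ω → Prop) : Prop where
  symm : ∀ {x y}, G x y → G y x
  measurableSet : MeasurableSet {p : Ω × Ω | G p.1 p.2}

namespace IsMeasurableGraph

variable {Ω : Type*} {G : Ω → Ω → Prop}

/-- The set of ordered pairs of adjacent points. -/
def edgeSet (G : Ω → Ω → Prop) : Set (Ω × Ω) := {p | G p.1 p.2}

/-- The neighbourhood of a point. -/
def nbhd (G : Ω → Ω → Prop) (x : Ω) : Set Ω := {y | G x y}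

variable [MeasurableSpace Ω] {μ : Measure Ω}

/-- The measure of the set of ordered adjacent pairs (twice the number of edges). -/
def edgeMass (μ : Measure Ω) (G : Ω → Ω → Prop) : ℝ := (μ.prod μ).real (edgeSet G)

/-- The degree of a point: the measure of its neighbourhood. -/
def degree (μ : Measure Ω) (G : Ω → Ω → Prop) (x : Ω) : ℝ := μ.real (nbhd G x)

/-- The codegree of two points: the measure of their common neighbourhood. -/
def codegree (μ : Measure Ω) (G : Ω → Ω → Prop) (x y : Ω) : ℝ := μ.real (nbhd G x ∩ nbhd G y)

/-- The measure of the set of points adjacent to neither of two given points. -/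
def nonCodegree (μ : Measure Ω) (G : Ω → Ω → Prop) (x y : Ω) : ℝ :=
  μ.real ((nbhd G x)ᶜ ∩ (nbhd G y)ᶜ)

/-- Almost every `n`-tuple of points fails to be a clique. -/
def CliqueFree (n : ℕ) (μ : Measure Ω) (G : Ω → Ω → Prop) : Prop :=
  ∀ᵐ x ∂(Measure.pi fun _ : Fin n => μ), ∃ i j, i < j ∧ ¬G (x i) (x j)

theorem measurableSet_edgeSet (hG : IsMeasurableGraph G) : MeasurableSet (edgeSet G) :=
  hG.measurableSet

theorem measurableSet_nbhd (hG : IsMeasurableGraph G) (x : Ω) : MeasurableSet (nbhd G x) :=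
  measurable_prodMk_left hG.measurableSet

theorem CliqueFree.ae_nbhd {n : ℕ} [SigmaFinite μ] (hG : IsMeasurableGraph G)
    (h : CliqueFree (n + 1) μ G) : ∀ᵐ x ∂μ, CliqueFree n (μ.restrict (nbhd G x)) G := by
  have hsplit := (measurePreserving_piFinSuccAbove (fun _ : Fin (n + 1) => μ) 0).symm
  filter_upwards [Measure.ae_ae_of_ae_prod (hsplit.quasiMeasurePreserving.ae h)] with x hx
  rw [CliqueFree, ← Measure.restrict_pi_pi,
    ae_restrict_iff' (MeasurableSet.univ_pi fun _ => hG.measurableSet_nbhd x)]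
  filter_upwards [hx] with y ⟨i, j, hij, hnadj⟩ hy
  obtain ⟨j, rfl⟩ := Fin.exists_succ_eq.2 (Fin.ne_zero_of_lt hij)
  rcases Fin.eq_zero_or_eq_succ i with rfl | ⟨i, rfl⟩
  · exact absurd (hy j (mem_univ j)) hnadj
  · exact ⟨i, j, Fin.succ_lt_succ_iff.1 hij, hnadj⟩

theorem CliqueFree.measure_eq_zero [SigmaFinite μ] (h : CliqueFree 1 μ G) : μ = 0 := by
  have hbot : ∀ᵐ _x ∂(Measure.pi fun _ : Fin 1 => μ), False := by
    filter_upwards [h] with x ⟨i, j, hij, _⟩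
    exact absurd hij (by simp [Subsingleton.elim i j])
  simpa [ae_eq_bot, ← Measure.measure_univ_eq_zero, Measure.pi_univ] using hbot

section FiniteMeasure

variable [IsFiniteMeasure μ]

theorem nonCodegree_eq (hG : IsMeasurableGraph G) (x y : Ω) :
    nonCodegree μ G x y = μ.real univ - degree μ G x - degree μ G y + codegree μ G x y := by
  have hunion := measureReal_union_add_inter (μ := μ) (s := nbhd G x) (hG.measurableSet_nbhd y)
  have hcompl := measureReal_compl (μ := μ)
    ((hG.measurableSet_nbhd x).union (hG.measurableSet_nbhd y))
  rw [nonCodegree, ← compl_union]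
  simp only [degree, codegree]
  linarith

theorem ae_adj_or_adj_of_nonCodegree_eq_zero {x y : Ω} (h : nonCodegree μ G x y = 0) :
    ∀ᵐ z ∂μ, G x z ∨ G y z := by
  filter_upwards [measure_eq_zero_iff_ae_notMem.1
    ((measureReal_eq_zero_iff (measure_ne_top _ _)).1 h)] with z hz
  by_contra! hcon
  exact hz hcon

theorem measurable_degree (hG : IsMeasurableGraph G) : Measurable (degree μ G) :=
  (measurable_measure_prodMk_left hG.measurableSet).ennreal_toReal

theorem measurable_codegree (hG : IsMeasurableGraph G) :
    Measurable fun q : Ω × Ω => codegree μ G q.1 q.2 := by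
  have hpair : MeasurableSet {t : (Ω × Ω) × Ω | G t.1.1 t.2 ∧ G t.1.2 t.2} :=
    (hG.measurableSet.preimage (measurable_fst.fst.prodMk measurable_snd)).inter
      (hG.measurableSet.preimage (measurable_fst.snd.prodMk measurable_snd))
  exact (measurable_measure_prodMk_left hpair).ennreal_toReal

theorem integrable_degree_pow (hG : IsMeasurableGraph G) (n : ℕ) :
    Integrable (fun x => degree μ G x ^ n) μ :=
  .of_bound (hG.measurable_degree.pow_const n).aestronglyMeasurable (μ.real univ ^ n) <|
    ae_of_all _ fun x => by
      rw [norm_pow, Real.norm_of_nonneg (show 0 ≤ degree μ G x from measureReal_nonneg)]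
      exact pow_le_pow_left₀ measureReal_nonneg (measureReal_mono (subset_univ _)) n

theorem integrable_codegree (hG : IsMeasurableGraph G) :
    Integrable (fun q : Ω × Ω => codegree μ G q.1 q.2) (μ.prod μ) :=
  .of_bound hG.measurable_codegree.aestronglyMeasurable (μ.real univ) <|
    ae_of_all _ fun q => by
      rw [Real.norm_of_nonneg (show 0 ≤ codegree μ G q.1 q.2 from measureReal_nonneg)]
      exact measureReal_mono (subset_univ _)

theorem integrable_nonCodegree (hG : IsMeasurableGraph G) :
    Integrable (fun q : Ω × Ω => nonCodegree μ G q.1 q.2) (μ.prod μ) := by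
  have hdeg : Integrable (degree μ G) μ := by simpa using hG.integrable_degree_pow (μ := μ) 1
  simp only [hG.nonCodegree_eq]
  exact (((integrable_const _).sub (hdeg.comp_fst μ)).sub (hdeg.comp_snd μ)).add
    hG.integrable_codegree

theorem setIntegral_edgeSet (hG : IsMeasurableGraph G) {f : Ω × Ω → ℝ}
    (hf : Integrable f (μ.prod μ)) :
    ∫ q in edgeSet G, f q ∂(μ.prod μ) = ∫ x, ∫ y in nbhd G x, f (x, y) ∂μ ∂μ := by
  rw [← integral_indicator hG.measurableSet_edgeSet,
    integral_prod _ (hf.indicator hG.measurableSet_edgeSet)]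
  refine integral_congr_ae (ae_of_all _ fun x => ?_)
  exact integral_indicator (f := fun y => f (x, y)) (hG.measurableSet_nbhd x)

theorem setIntegral_edgeSet_fst (hG : IsMeasurableGraph G) {f : Ω → ℝ} (hf : Integrable f μ) :
    ∫ q in edgeSet G, f q.1 ∂(μ.prod μ) = ∫ x, degree μ G x * f x ∂μ := by
  simp only [hG.setIntegral_edgeSet (hf.comp_fst μ), setIntegral_const, smul_eq_mul, degree]

theorem setIntegral_edgeSet_snd (hG : IsMeasurableGraph G) {f : Ω → ℝ} (hf : Integrable f μ) :
    ∫ q in edgeSet G, f q.2 ∂(μ.prod μ) = ∫ x, degree μ G x * f x ∂μ := by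
  have hswap : Prod.swap ⁻¹' edgeSet G = edgeSet G := by
    ext q
    exact ⟨hG.symm, hG.symm⟩
  rw [← hG.setIntegral_edgeSet_fst hf]
  nth_rw 1 [← hswap]
  exact (Measure.measurePreserving_swap (μ := μ) (ν := μ)).setIntegral_preimage_emb
    MeasurableEquiv.prodComm.measurableEmbedding (fun q => f q.1) _

theorem edgeMass_eq_integral_degree (hG : IsMeasurableGraph G) :
    edgeMass μ G = ∫ x, degree μ G x ∂μ := by
  simpa [edgeMass] using hG.setIntegral_edgeSet_fst (μ := μ) (integrable_const (1 : ℝ))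

theorem edgeMass_restrict_nbhd (hG : IsMeasurableGraph G) (x : Ω) :
    edgeMass (μ.restrict (nbhd G x)) G = ∫ y in nbhd G x, codegree μ G x y ∂μ := by
  rw [hG.edgeMass_eq_integral_degree]
  simp only [degree, codegree, measureReal_restrict_apply (hG.measurableSet_nbhd _), inter_comm]

/-- Goodman's identity. -/
theorem setIntegral_nonCodegree (hG : IsMeasurableGraph G) :
    ∫ q in edgeSet G, nonCodegree μ G q.1 q.2 ∂(μ.prod μ) =
      μ.real univ * edgeMass μ G - 2 * ∫ x, degree μ G x ^ 2 ∂μ +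
        ∫ x, edgeMass (μ.restrict (nbhd G x)) G ∂μ := by
  have hdeg : Integrable (degree μ G) μ := by simpa using hG.integrable_degree_pow (μ := μ) 1
  have hfst := (hdeg.comp_fst μ).integrableOn (s := edgeSet G)
  have hsnd := (hdeg.comp_snd μ).integrableOn (s := edgeSet G)
  have hconst := integrableOn_const (μ := μ.prod μ) (s := edgeSet G) (C := μ.real univ)
  simp only [hG.nonCodegree_eq]
  rw [integral_add (by exact (hconst.sub hfst).sub hsnd) hG.integrable_codegree.integrableOn,
    integral_sub (by exact hconst.sub hfst) hsnd, integral_sub hconst hfst,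
    hG.setIntegral_edgeSet_fst hdeg, hG.setIntegral_edgeSet_snd hdeg,
    hG.setIntegral_edgeSet hG.integrable_codegree, setIntegral_const]
  simp only [hG.edgeMass_restrict_nbhd, smul_eq_mul, sq]
  rw [edgeMass]
  ring

theorem mul_setIntegral_nonCodegree_add_le (hG : IsMeasurableGraph G) {k : ℝ}
    (hk : 0 ≤ k)
    (h : ∀ᵐ x ∂μ, k * edgeMass (μ.restrict (nbhd G x)) G ≤ (k - 1) * degree μ G x ^ 2) :
    k * ∫ q in edgeSet G, nonCodegree μ G q.1 q.2 ∂(μ.prod μ) +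
      (k + 1) * ∫ x, degree μ G x ^ 2 ∂μ ≤ k * μ.real univ * edgeMass μ G := by
  have htri : ∫ x, k * edgeMass (μ.restrict (nbhd G x)) G ∂μ ≤
      ∫ x, (k - 1) * degree μ G x ^ 2 ∂μ :=
    integral_mono_of_nonneg (ae_of_all μ fun x => mul_nonneg hk measureReal_nonneg)
      ((hG.integrable_degree_pow 2).const_mul _) h
  simp only [integral_const_mul] at htri
  rw [hG.setIntegral_nonCodegree]
  linarith

theorem memLp_degree (hG : IsMeasurableGraph G) : MemLp (degree μ G) 2 μ :=
  (memLp_two_iff_integrable_sq hG.measurable_degree.aestronglyMeasurable).2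
    (hG.integrable_degree_pow 2)

theorem sq_edgeMass_le (hG : IsMeasurableGraph G) :
    edgeMass μ G ^ 2 ≤ μ.real univ * ∫ x, degree μ G x ^ 2 ∂μ := by
  rw [hG.edgeMass_eq_integral_degree]
  exact sq_integral_le hG.memLp_degree

theorem CliqueFree.mul_edgeMass_le (hG : IsMeasurableGraph G) {r : ℕ}
    (h : CliqueFree (r + 1) μ G) : r * edgeMass μ G ≤ (r - 1) * μ.real univ ^ 2 := by
  induction r generalizing μ with
  | zero => simp [h.measure_eq_zero]
  | succ r ih =>
    have hnbhd : ∀ᵐ x ∂μ,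
        r * edgeMass (μ.restrict (nbhd G x)) G ≤ (r - 1) * degree μ G x ^ 2 := by
      filter_upwards [h.ae_nbhd hG] with x hx
      simpa [degree] using ih hx
    have hdefect := hG.mul_setIntegral_nonCodegree_add_le r.cast_nonneg hnbhd
    have hS : 0 ≤ r * ∫ q in edgeSet G, nonCodegree μ G q.1 q.2 ∂(μ.prod μ) :=
      mul_nonneg r.cast_nonneg (integral_nonneg fun q => measureReal_nonneg)
    have hCS := hG.sq_edgeMass_le (μ := μ)
    have hm : 0 ≤ μ.real univ := measureReal_nonneg
    have hp : 0 ≤ edgeMass μ G := measureReal_nonneg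
    have hmul : edgeMass μ G * ((r + 1) * edgeMass μ G) ≤
        edgeMass μ G * (r * μ.real univ ^ 2) := calc
      edgeMass μ G * ((r + 1) * edgeMass μ G) = (r + 1) * edgeMass μ G ^ 2 := by ring
      _ ≤ (r + 1) * (μ.real univ * ∫ x, degree μ G x ^ 2 ∂μ) := by gcongr
      _ = μ.real univ * ((r + 1) * ∫ x, degree μ G x ^ 2 ∂μ) := by ring
      _ ≤ μ.real univ * (r * μ.real univ * edgeMass μ G) :=
        mul_le_mul_of_nonneg_left (by linarith) hm
      _ = edgeMass μ G * (r * μ.real univ ^ 2) := by ring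
    push_cast
    rcases hp.eq_or_lt with hp | hp
    · rw [← hp, mul_zero]
      exact mul_nonneg (by simp) (sq_nonneg _)
    · simpa using le_of_mul_le_mul_left hmul hp

theorem CliqueFree.mul_setIntegral_nonCodegree_add_le (hG : IsMeasurableGraph G) {k : ℕ}
    (h : CliqueFree (k + 2) μ G) :
    k * ∫ q in edgeSet G, nonCodegree μ G q.1 q.2 ∂(μ.prod μ) +
      (k + 1) * ∫ x, degree μ G x ^ 2 ∂μ ≤ k * μ.real univ * edgeMass μ G := by
  refine hG.mul_setIntegral_nonCodegree_add_le k.cast_nonneg ?_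
  filter_upwards [h.ae_nbhd hG] with x hx
  simpa [degree] using hx.mul_edgeMass_le hG

end FiniteMeasure

section ProbabilityMeasure

variable [IsProbabilityMeasure μ]

theorem CliqueFree.edgeMass_le (hG : IsMeasurableGraph G) {k : ℕ} (h : CliqueFree (k + 2) μ G) :
    edgeMass μ G ≤ 1 - 1 / (k + 1) := by
  have hle := h.mul_edgeMass_le hG
  rw [probReal_univ] at hle
  push_cast at hle
  have hk : (0 : ℝ) < k + 1 := k.cast_add_one_pos
  rw [one_sub_div hk.ne', le_div_iff₀' hk]
  linarith

theorem edgeMass_ne {ι : Type*} [MeasurableSpace ι] [MeasurableEq ι]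
    {c : Ω → ι} (hc : Measurable c) {a : ℝ} (hclass : ∀ i, μ.real (c ⁻¹' {i}) = a) :
    edgeMass μ (fun x y => c x ≠ c y) = 1 - a := by
  have hG : IsMeasurableGraph fun x y => c x ≠ c y :=
    ⟨Ne.symm, (measurableSet_eq_fun (hc.comp measurable_fst) (hc.comp measurable_snd)).compl⟩
  have hdegree : ∀ x, degree μ (fun x y => c x ≠ c y) x = 1 - a := fun x => by
    have hnbhd : nbhd (fun x y => c x ≠ c y) x = (c ⁻¹' {c x})ᶜ := by
      ext y
      exact ne_comm
    rw [degree, hnbhd, probReal_compl_eq_one_sub (hc (measurableSet_singleton _)), hclass]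
  rw [hG.edgeMass_eq_integral_degree]
  simp [hdegree]

theorem CliqueFree.mul_setIntegral_nonCodegree_le (hG : IsMeasurableGraph G) {k : ℕ}
    (h : CliqueFree (k + 2) μ G) (hp : edgeMass μ G = 1 - 1 / (k + 1)) :
    k * ∫ q in edgeSet G, nonCodegree μ G q.1 q.2 ∂(μ.prod μ) ≤
      (k + 1) * (edgeMass μ G ^ 2 - ∫ x, degree μ G x ^ 2 ∂μ) := by
  have hk : (k : ℝ) = (k + 1) * edgeMass μ G := by
    rw [hp]
    field_simp
    ring
  have hmass : k * μ.real univ * edgeMass μ G = (k + 1) * edgeMass μ G ^ 2 := by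
    rw [probReal_univ, mul_one, sq, ← mul_assoc, ← hk]
  linarith [h.mul_setIntegral_nonCodegree_add_le hG]

theorem CliqueFree.ae_degree_eq (hG : IsMeasurableGraph G) {k : ℕ}
    (h : CliqueFree (k + 2) μ G) (hp : edgeMass μ G = 1 - 1 / (k + 1)) :
    ∀ᵐ x ∂μ, degree μ G x = edgeMass μ G := by
  have hS : 0 ≤ k * ∫ q in edgeSet G, nonCodegree μ G q.1 q.2 ∂(μ.prod μ) :=
    mul_nonneg k.cast_nonneg (integral_nonneg fun q => measureReal_nonneg)
  have hD : ∫ x, degree μ G x ^ 2 ∂μ ≤ edgeMass μ G ^ 2 :=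
    sub_nonneg.1 <| nonneg_of_mul_nonneg_right
      (hS.trans (h.mul_setIntegral_nonCodegree_le hG hp)) k.cast_add_one_pos
  have hvar : ∫ x, (degree μ G x - edgeMass μ G) ^ 2 ∂μ = 0 := by
    refine le_antisymm ?_ (integral_nonneg fun x => sq_nonneg _)
    rw [integral_sub_const_sq hG.memLp_degree, ← hG.edgeMass_eq_integral_degree, probReal_univ]
    linarith
  rw [integral_eq_zero_iff_of_nonneg (fun x => sq_nonneg _)
    (by exact (hG.memLp_degree.sub (memLp_const _)).integrable_sq)] at hvar
  filter_upwards [hvar] with x hx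
  exact sub_eq_zero.1 (sq_eq_zero_iff.1 hx)

theorem CliqueFree.ae_nonCodegree_eq_zero (hG : IsMeasurableGraph G) {k : ℕ}
    (h : CliqueFree (k + 2) μ G) (hp : edgeMass μ G = 1 - 1 / (k + 1)) :
    ∀ᵐ q ∂(μ.prod μ), G q.1 q.2 → nonCodegree μ G q.1 q.2 = 0 := by
  rcases k.eq_zero_or_pos with rfl | hk
  · have hnull : ∀ᵐ q ∂(μ.prod μ), q ∉ edgeSet G :=
      measure_eq_zero_iff_ae_notMem.1 <| by
        simpa [edgeMass, measureReal_eq_zero_iff] using hp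
    filter_upwards [hnull] with q hq hadj
    exact absurd hadj hq
  have hCS : edgeMass μ G ^ 2 ≤ ∫ x, degree μ G x ^ 2 ∂μ := by
    simpa using hG.sq_edgeMass_le (μ := μ)
  have hS : ∫ q in edgeSet G, nonCodegree μ G q.1 q.2 ∂(μ.prod μ) = 0 := by
    refine le_antisymm ?_ (integral_nonneg fun q => measureReal_nonneg)
    have hle := h.mul_setIntegral_nonCodegree_le hG hp
    have hk' : (0 : ℝ) < k := Nat.cast_pos.2 hk
    nlinarith
  exact (ae_restrict_iff' hG.measurableSet_edgeSet).1 <|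
    (integral_eq_zero_iff_of_nonneg (fun q => measureReal_nonneg)
      hG.integrable_nonCodegree.integrableOn).1 hS

theorem measureReal_compl_nbhd (hG : IsMeasurableGraph G) (x : Ω) :
    μ.real (nbhd G x)ᶜ = 1 - degree μ G x :=
  probReal_compl_eq_one_sub (hG.measurableSet_nbhd x)

theorem exists_clique (hG : IsMeasurableGraph G) {k : ℕ} {P : Ω → Prop} {Q : Ω → Ω → Prop}
    (hP : ∀ᵐ x ∂μ, P x) (hQ : ∀ᵐ q ∂(μ.prod μ), Q q.1 q.2) (h : ¬CliqueFree k μ G) :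
    ∃ x : Fin k → Ω, (Pairwise fun i j => G (x i) (x j)) ∧ (∀ i, P (x i)) ∧
      Pairwise fun i j => Q (x i) (x j) := by
  have hP' : ∀ᵐ x ∂(Measure.pi fun _ : Fin k => μ), ∀ i, P (x i) :=
    ae_all_iff.2 fun i =>
      (measurePreserving_eval (fun _ : Fin k => μ) i).quasiMeasurePreserving.ae hP
  obtain ⟨x, hx, hPx, hQx⟩ := ((not_eventually.1 h).and_eventually
    (hP'.and (ae_pi_of_ae_prod hQ))).exists
  push Not at hx
  refine ⟨x, fun i j hij => ?_, hPx, hQx⟩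
  rcases hij.lt_or_gt with hlt | hlt
  exacts [hx i j hlt, hG.symm (hx j i hlt)]

theorem not_cliqueFree_of_edgeMass_eq (hG : IsMeasurableGraph G) {k : ℕ}
    (hp : edgeMass μ G = 1 - 1 / (k + 1)) : ¬CliqueFree (k + 1) μ G := by
  intro h
  have hle := h.mul_edgeMass_le hG
  rw [hp, probReal_univ] at hle
  field_simp at hle
  linarith

theorem exists_nonNbhd_partition (hG : IsMeasurableGraph G) {k : ℕ}
    (h : CliqueFree (k + 2) μ G) (hp : edgeMass μ G = 1 - 1 / (k + 1)) :
    ∃ (x : Fin (k + 1) → Ω) (c : Ω → Fin (k + 1)), Measurable c ∧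
      (∀ i, degree μ G (x i) = edgeMass μ G) ∧ (∀ᵐ z ∂μ, ∀ i, ¬G (x i) z ↔ c z = i) ∧
      ∀ᵐ y ∂μ, ∀ i, G (x i) y → nonCodegree μ G (x i) y = 0 := by
  have hzero := h.ae_nonCodegree_eq_zero hG hp
  obtain ⟨x, hclique, hx, hpair⟩ := hG.exists_clique
    (Q := fun x y => G x y → nonCodegree μ G x y = 0)
    ((h.ae_degree_eq hG hp).and (Measure.ae_ae_of_ae_prod hzero)) hzero
    (hG.not_cliqueFree_of_edgeMass_eq hp)
  have hmeas : ∀ i, MeasurableSet (nbhd G (x i))ᶜ := fun i => (hG.measurableSet_nbhd _).compl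
  have hdisj : Pairwise (Function.onFun (AEDisjoint μ) fun i => (nbhd G (x i))ᶜ) :=
    fun i j hij => (measureReal_eq_zero_iff (measure_ne_top _ _)).1 (hpair hij (hclique hij))
  have hsum : ∑ i, μ.real (nbhd G (x i))ᶜ = 1 := by
    simp only [hG.measureReal_compl_nbhd, (hx _).1, hp, Finset.sum_const, Finset.card_univ,
      Fintype.card_fin, nsmul_eq_mul]
    push_cast
    field_simp
    ring
  obtain ⟨c, hc, hcA⟩ := exists_measurable_ae_mem_iff hmeas hdisj
    (ae_exists_mem_of_sum_eq_one hmeas hdisj hsum)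
  exact ⟨x, c, hc, fun i => (hx i).1, hcA, ae_all_iff.2 fun i => (hx i).2⟩

theorem CliqueFree.exists_multipartite (hG : IsMeasurableGraph G) {k : ℕ}
    (h : CliqueFree (k + 2) μ G) (hp : edgeMass μ G = 1 - 1 / (k + 1)) :
    ∃ c : Ω → Fin (k + 1), Measurable c ∧ (∀ i, μ.real (c ⁻¹' {i}) = 1 / (k + 1)) ∧
      ∀ᵐ q ∂(μ.prod μ), G q.1 q.2 ↔ c q.1 ≠ c q.2 := by
  obtain ⟨x, c, hc, hxdeg, hxc, hext⟩ := hG.exists_nonNbhd_partition h hp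
  have hclass : ∀ i, μ.real (c ⁻¹' {i}) = 1 / (k + 1) := fun i => by
    have hcongr : μ.real (nbhd G (x i))ᶜ = μ.real (c ⁻¹' {i}) := measureReal_congr <| by
      filter_upwards [hxc] with z hz
      exact propext (hz i)
    rw [← hcongr, hG.measureReal_compl_nbhd, hxdeg, hp, sub_sub_cancel]
  refine ⟨c, hc, hclass, (Measure.ae_prod_iff_ae_ae (hG.measurableSet.iff
    (measurableSet_eq_fun (hc.comp measurable_fst) (hc.comp measurable_snd)).compl)).2 ?_⟩
  filter_upwards [hxc, hext, h.ae_degree_eq hG hp] with y hyc hyext hydeg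
  have hsub : (nbhd G y)ᶜ ≤ᵐ[μ] c ⁻¹' {c y} := by
    have hor : ∀ᵐ z ∂μ, ∀ i, G (x i) y → G (x i) z ∨ G y z := ae_all_iff.2 fun i =>
      eventually_imp_distrib_left.2 fun hi => ae_adj_or_adj_of_nonCodegree_eq_zero (hyext i hi)
    filter_upwards [hxc, hor] with z hzc hz hyz
    by_contra hne
    have hadj : G (x (c z)) y := by_contra fun hnadj => hne ((hyc _).1 hnadj).symm
    exact ((hz _ hadj).resolve_right hyz) |> (hzc _).2 rfl
  have hmass : μ.real (c ⁻¹' {c y}) = μ.real (nbhd G y)ᶜ := by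
    rw [hclass, hG.measureReal_compl_nbhd, hydeg, hp, sub_sub_cancel]
  have heq : (nbhd G y)ᶜ =ᵐ[μ] c ⁻¹' {c y} :=
    ae_eq_of_ae_subset_of_measure_ge hsub
      ((measureReal_eq_measureReal_iff (measure_ne_top _ _) (measure_ne_top _ _)).1 hmass).le
      (hG.measurableSet_nbhd y).compl.nullMeasurableSet (measure_ne_top _ _)
  filter_upwards [heq] with z hz
  exact not_iff_comm.1 ((iff_of_eq hz).trans eq_comm) |>.symm

end ProbabilityMeasure

end IsMeasurableGraph

section WeakConvergence

open scoped NNReal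

variable {α β ι : Type*} [MeasurableSpace α] {mβ : MeasurableSpace β} {μ : Measure α}
  {ν : Measure β} {l : Filter ι} {τ : ι → α → β} {U : ι → α → ℝ} {C : ℝ≥0}

theorem integral_comp_of_measurePreserving {σ : α → β} (hσ : MeasurePreserving σ μ ν) {E : Type*}
    [NormedAddCommGroup E] [NormedSpace ℝ E] {f : β → E} (hf : AEStronglyMeasurable f ν) :
    ∫ x, f (σ x) ∂μ = ∫ y, f y ∂ν := by
  have hmap := integral_map hσ.aemeasurable (hσ.map_eq.symm ▸ hf)
  rw [hσ.map_eq] at hmap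
  exact hmap.symm

theorem integrable_comp_mul {σ : α → β} {V : α → ℝ} (hσ : MeasurePreserving σ μ ν)
    (hV : AEStronglyMeasurable V μ) (hC : ∀ x, ‖V x‖ ≤ C) {f : β → ℝ} (hf : Integrable f ν) :
    Integrable (fun x => f (σ x) * V x) μ :=
  (hσ.integrable_comp_of_integrable hf).mul_bdd hV (ae_of_all _ hC)

theorem lipschitzWith_integral_comp_mul {σ : α → β} {V : α → ℝ} (hσ : MeasurePreserving σ μ ν)
    (hV : AEStronglyMeasurable V μ) (hC : ∀ x, ‖V x‖ ≤ C) :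
    LipschitzWith C fun f : β →₁[ν] ℝ => ∫ x, f (σ x) * V x ∂μ := by
  refine LipschitzWith.of_dist_le_mul fun f g => ?_
  have hf := integrable_comp_mul hσ hV hC (L1.integrable_coeFn f)
  have hg := integrable_comp_mul hσ hV hC (L1.integrable_coeFn g)
  have hsub := (L1.integrable_coeFn f).sub (L1.integrable_coeFn g)
  have hbound : ∀ x, ‖f (σ x) * V x - g (σ x) * V x‖ ≤ C * ‖(⇑f - ⇑g) (σ x)‖ := fun x => by
    rw [← sub_mul, norm_mul, mul_comm]
    exact mul_le_mul_of_nonneg_right (hC x) (norm_nonneg _)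
  calc dist (∫ x, f (σ x) * V x ∂μ) (∫ x, g (σ x) * V x ∂μ)
      = ‖∫ x, f (σ x) * V x - g (σ x) * V x ∂μ‖ := by rw [dist_eq_norm, integral_sub hf hg]
    _ ≤ ∫ x, C * ‖(⇑f - ⇑g) (σ x)‖ ∂μ := norm_integral_le_of_norm_le
        ((hσ.integrable_comp_of_integrable hsub.norm).const_mul _) (ae_of_all _ hbound)
    _ = C * ∫ y, ‖(⇑f - ⇑g) y‖ ∂ν := by
        rw [integral_const_mul,
          integral_comp_of_measurePreserving hσ hsub.norm.aestronglyMeasurable]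
    _ = C * dist f g := by
        rw [L1.dist_eq_integral_dist]
        simp only [Pi.sub_apply, dist_eq_norm]

theorem tendsto_integral_comp_mul (hτ : ∀ n, MeasurePreserving (τ n) μ ν)
    (hU : ∀ n, AEStronglyMeasurable (U n) μ) (hC : ∀ n x, ‖U n x‖ ≤ C)
    (hlim : ∀ B, MeasurableSet B → Tendsto (fun n => ∫ x in τ n ⁻¹' B, U n x ∂μ) l (nhds 0))
    {f : β → ℝ} (hf : Integrable f ν) :
    Tendsto (fun n => ∫ x, f (τ n x) * U n x ∂μ) l (nhds 0) := by
  refine Integrable.induction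
    (P := fun f => Tendsto (fun n => ∫ x, f (τ n x) * U n x ∂μ) l (nhds 0)) ?_ ?_ ?_ ?_ hf
  · intro c B hB _
    have hscaled := (hlim B hB).const_mul c
    rw [mul_zero] at hscaled
    refine hscaled.congr fun n => ?_
    rw [← integral_const_mul, ← integral_indicator ((hτ n).measurable hB)]
    refine integral_congr_ae (ae_of_all _ fun x => ?_)
    by_cases hx : τ n x ∈ B <;> simp [hx]
  · intro f g _ hf hg hf0 hg0
    have hsum := hf0.add hg0
    rw [add_zero] at hsum
    refine hsum.congr fun n => ?_
    rw [← integral_add (integrable_comp_mul (hτ n) (hU n) (hC n) hf)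
      (integrable_comp_mul (hτ n) (hU n) (hC n) hg)]
    simp only [Pi.add_apply, add_mul]
  · exact (LipschitzWith.uniformEquicontinuous _ C
      fun n => lipschitzWith_integral_comp_mul (hτ n) (hU n) (hC n)).equicontinuous
      |>.isClosed_setOfPred_tendsto continuous_const
  · intro f g hfg _ hf0
    refine hf0.congr fun n => integral_congr_ae ?_
    filter_upwards [(hτ n).quasiMeasurePreserving.ae hfg] with x hx
    rw [hx]

variable [IsFiniteMeasure μ] [IsFiniteMeasure ν]

theorem tendsto_setIntegral_preimage_of_isPiSystem (hτ : ∀ n, MeasurePreserving (τ n) μ ν)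
    (hU : ∀ n, AEStronglyMeasurable (U n) μ) (hC : ∀ n x, ‖U n x‖ ≤ C) {𝒮 : Set (Set β)}
    (hgen : mβ = MeasurableSpace.generateFrom 𝒮) (hpi : IsPiSystem 𝒮)
    (huniv : Tendsto (fun n => ∫ x, U n x ∂μ) l (nhds 0))
    (hlim : ∀ B ∈ 𝒮, Tendsto (fun n => ∫ x in τ n ⁻¹' B, U n x ∂μ) l (nhds 0))
    {B : Set β} (hB : MeasurableSet B) :
    Tendsto (fun n => ∫ x in τ n ⁻¹' B, U n x ∂μ) l (nhds 0) := by
  have hint : ∀ n, Integrable (U n) μ := fun n =>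
    .of_bound (hU n) C (ae_of_all _ (hC n))
  induction B, hB using MeasurableSpace.induction_on_inter hgen hpi with
  | empty => simp [tendsto_const_nhds]
  | basic B hB => exact hlim B hB
  | compl B hB ih =>
    have hdiff := huniv.sub ih
    rw [sub_zero] at hdiff
    exact hdiff.congr fun n => (setIntegral_compl ((hτ n).measurable hB) (hint n)).symm
  | iUnion B hdisj hB ih =>
    have hsum : ∀ n, ∫ x in τ n ⁻¹' ⋃ i, B i, U n x ∂μ = ∑' i, ∫ x in τ n ⁻¹' B i, U n x ∂μ :=
      fun n => by
        rw [preimage_iUnion, integral_iUnion (fun i => (hτ n).measurable (hB i))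
          (fun i j hij => (hdisj hij).preimage _) (hint n).integrableOn]
    have hsummable : Summable fun i => (C : ℝ) * ν.real (B i) :=
      (summable_measure_toReal hB hdisj).mul_left _
    simp only [hsum]
    rw [← tsum_zero (α := ℝ) (β := ℕ)]
    refine tendsto_tsum_of_dominated_convergence hsummable ih (.of_forall fun n i => ?_)
    have hbound := norm_setIntegral_le_of_norm_le_const (μ := μ) (s := τ n ⁻¹' B i)
      (measure_lt_top _ _) fun x _ => hC n x
    rwa [measureReal_def, (hτ n).measure_preimage (hB i).nullMeasurableSet] at hbound

end WeakConvergence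

/-- Lebesgue measure on `[0,1]`, as a measure on `ℝ`. -/
def unitMeasure : Measure ℝ := volume.restrict (Icc 0 1)

instance : IsProbabilityMeasure unitMeasure :=
  ⟨by simp [unitMeasure]⟩

theorem unitMeasure_prod_unitMeasure :
    unitMeasure.prod unitMeasure = volume.restrict (Icc (0 : ℝ) 1 ×ˢ Icc (0 : ℝ) 1) :=
  Measure.prod_restrict _ _

theorem IsMPSelf.measurePreserving {σ : ℝ → ℝ} (h : IsMPSelf σ) :
    MeasurePreserving σ unitMeasure unitMeasure :=
  h.1

theorem IsMPSelf.measurePreserving_prodMap {σ : ℝ → ℝ} (h : IsMPSelf σ) :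
    MeasurePreserving (Prod.map σ σ) (unitMeasure.prod unitMeasure)
      (unitMeasure.prod unitMeasure) :=
  h.measurePreserving.prod h.measurePreserving

theorem isMPSelf_id : IsMPSelf id :=
  ⟨MeasurePreserving.id _, mapsTo_id _⟩

section CutNorm

variable {U W W' : ℝ → ℝ → ℝ}

theorem cutNorm_nonneg : 0 ≤ cutNorm U := by
  refine Real.sSup_nonneg ?_
  rintro _ ⟨S, T, -, -, -, -, rfl⟩
  exact abs_nonneg _

theorem abs_setIntegral_prod_le_cutNorm (hU : ∀ x y, ‖U x y‖ ≤ 1) {S T : Set ℝ}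
    (hS : MeasurableSet S) (hT : MeasurableSet T) :
    |∫ p in S ×ˢ T, U p.1 p.2 ∂(unitMeasure.prod unitMeasure)| ≤ cutNorm U := by
  have hrestrict : (unitMeasure.prod unitMeasure).restrict (S ×ˢ T) =
      volume.restrict ((S ∩ Icc 0 1) ×ˢ (T ∩ Icc 0 1)) := by
    rw [unitMeasure_prod_unitMeasure, Measure.restrict_restrict (hS.prod hT), prod_inter_prod]
  rw [hrestrict]
  refine le_csSup ⟨1, ?_⟩ ⟨_, _, hS.inter measurableSet_Icc, hT.inter measurableSet_Icc,
    inter_subset_right, inter_subset_right, rfl⟩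
  rintro _ ⟨S, T, -, -, hS, hT, rfl⟩
  have hle : volume (S ×ˢ T) ≤ 1 := calc
    volume (S ×ˢ T) ≤ volume (Icc (0 : ℝ) 1 ×ˢ Icc (0 : ℝ) 1) := measure_mono (prod_mono hS hT)
    _ = 1 := by rw [Measure.volume_eq_prod, Measure.prod_prod]; simp
  calc |∫ p in S ×ˢ T, U p.1 p.2| ≤ 1 * volume.real (S ×ˢ T) :=
        norm_setIntegral_le_of_norm_le_const (hle.trans_lt ENNReal.one_lt_top)
          fun p _ => hU p.1 p.2
    _ ≤ 1 := by simpa [measureReal_def] using ENNReal.toReal_mono ENNReal.one_ne_top hle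

theorem tendsto_setIntegral_preimage_of_tendsto_cutNorm {ι : Type*} {l : Filter ι}
    {σ : ι → ℝ → ℝ} {U : ι → ℝ → ℝ → ℝ} (hσ : ∀ n, IsMPSelf (σ n))
    (hUm : ∀ n, Measurable fun p : ℝ × ℝ => U n p.1 p.2) (hU : ∀ n x y, ‖U n x y‖ ≤ 1)
    (hlim : Tendsto (fun n => cutNorm (U n)) l (nhds 0)) {B : Set (ℝ × ℝ)}
    (hB : MeasurableSet B) :
    Tendsto (fun n => ∫ p in Prod.map (σ n) (σ n) ⁻¹' B, U n p.1 p.2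
      ∂(unitMeasure.prod unitMeasure)) l (nhds 0) := by
  have hrect : ∀ S T, MeasurableSet S → MeasurableSet T →
      Tendsto (fun n => ∫ p in Prod.map (σ n) (σ n) ⁻¹' (S ×ˢ T), U n p.1 p.2
        ∂(unitMeasure.prod unitMeasure)) l (nhds 0) := fun S T hS hT =>
    squeeze_zero_norm (fun n => abs_setIntegral_prod_le_cutNorm (hU n)
      ((hσ n).measurePreserving.measurable hS) ((hσ n).measurePreserving.measurable hT)) hlim
  refine tendsto_setIntegral_preimage_of_isPiSystem (C := 1)
    (fun n => (hσ n).measurePreserving_prodMap) (fun n => (hUm n).aestronglyMeasurable)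
    (fun n p => hU n p.1 p.2)
    generateFrom_prod.symm isPiSystem_prod ?_ ?_ hB
  · simpa using hrect univ univ .univ .univ
  · rintro _ ⟨S, hS, T, hT, rfl⟩
    exact hrect S T hS hT

theorem exists_seq_tendsto_cutNorm (h : deltaCut W W' = 0) :
    ∃ σ₁ σ₂ : ℕ → ℝ → ℝ, (∀ n, IsMPSelf (σ₁ n)) ∧ (∀ n, IsMPSelf (σ₂ n)) ∧
      Tendsto (fun n => cutNorm fun x y => W (σ₁ n x) (σ₁ n y) - W' (σ₂ n x) (σ₂ n y))
        atTop (nhds 0) := by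
  obtain ⟨u, -, hu, hmem⟩ := exists_seq_tendsto_sInf (S := {r : ℝ | ∃ σ₁ σ₂ : ℝ → ℝ,
    IsMPSelf σ₁ ∧ IsMPSelf σ₂ ∧ r = cutNorm fun x y => W (σ₁ x) (σ₁ y) - W' (σ₂ x) (σ₂ y)})
    ⟨_, id, id, isMPSelf_id, isMPSelf_id, rfl⟩
    ⟨0, by rintro _ ⟨_, _, _, _, rfl⟩; exact cutNorm_nonneg⟩
  choose σ₁ σ₂ hσ₁ hσ₂ hcut using hmem
  refine ⟨σ₁, σ₂, hσ₁, hσ₂, ?_⟩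
  rw [← h]
  exact hu.congr hcut

theorem deltaCut_eq_zero_of_ae_eq {σ : ℝ → ℝ} (hσ : IsMPSelf σ)
    (h : ∀ᵐ p ∂(unitMeasure.prod unitMeasure), W (σ p.1) (σ p.2) = W' p.1 p.2) :
    deltaCut W W' = 0 := by
  have hnonneg : ∀ s ∈ {s : ℝ | ∃ σ₁ σ₂ : ℝ → ℝ, IsMPSelf σ₁ ∧ IsMPSelf σ₂ ∧
      s = cutNorm fun x y => W (σ₁ x) (σ₁ y) - W' (σ₂ x) (σ₂ y)}, 0 ≤ s := by
    rintro _ ⟨_, _, _, _, rfl⟩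
    exact cutNorm_nonneg
  have hzero : cutNorm (fun x y => W (σ x) (σ y) - W' x y) = 0 := by
    refine le_antisymm (Real.sSup_le ?_ le_rfl) cutNorm_nonneg
    rintro _ ⟨S, T, -, -, hS, hT, rfl⟩
    rw [integral_eq_zero_of_ae, abs_zero]
    rw [unitMeasure_prod_unitMeasure] at h
    filter_upwards [ae_restrict_of_ae_restrict_of_subset (prod_mono hS hT) h] with p hp
    exact sub_eq_zero.2 hp
  exact le_antisymm (csInf_le ⟨0, hnonneg⟩ ⟨σ, id, hσ, isMPSelf_id, hzero.symm⟩)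
    (Real.sInf_nonneg hnonneg)

end CutNorm

namespace IsGraphon

variable {W W' : ℝ → ℝ → ℝ}

theorem comp (hW : IsGraphon W) {σ : ℝ → ℝ} (hσ : Measurable σ) :
    IsGraphon fun x y => W (σ x) (σ y) :=
  ⟨fun _ _ => hW.1 _ _, hW.2.1.comp (hσ.prodMap hσ), fun _ _ => hW.2.2 _ _⟩

theorem integrable_comp (hW : IsGraphon W) {φ : ℝ → ℝ} (hφ : Continuous φ)
    {μ : Measure (ℝ × ℝ)} [IsFiniteMeasure μ] : Integrable (fun p => φ (W p.1 p.2)) μ := by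
  obtain ⟨C, hC⟩ := isCompact_Icc.exists_bound_of_continuousOn (hφ.continuousOn (s := Icc 0 1))
  exact .of_bound (hφ.measurable.comp hW.2.1).aestronglyMeasurable C
    (ae_of_all _ fun p => hC _ (hW.2.2 p.1 p.2))

theorem norm_sub_le_one (hW : IsGraphon W) (hW' : IsGraphon W') (x y x' y' : ℝ) :
    ‖W x y - W' x' y'‖ ≤ 1 :=
  abs_sub_le_of_le_of_le (hW.2.2 x y).1 (hW.2.2 x y).2 (hW'.2.2 x' y').1 (hW'.2.2 x' y').2
    |>.trans (by simp)

section Tangent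

variable {φ g : ℝ → ℝ}

theorem integral_comp_le_sub_integral_mul (hW : IsGraphon W) (hW' : IsGraphon W')
    (hφ : Continuous φ) (hg : Continuous g)
    (htangent : ∀ u ∈ Icc (0 : ℝ) 1, ∀ v ∈ Icc (0 : ℝ) 1, φ v ≤ φ u + g u * (v - u))
    {σ σ' : ℝ → ℝ} (hσ : IsMPSelf σ) (hσ' : IsMPSelf σ') :
    ∫ p, φ (W' p.1 p.2) ∂(unitMeasure.prod unitMeasure) ≤
      ∫ p, φ (W p.1 p.2) ∂(unitMeasure.prod unitMeasure) -
        ∫ p, g (W (σ p.1) (σ p.2)) * (W (σ p.1) (σ p.2) - W' (σ' p.1) (σ' p.2))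
          ∂(unitMeasure.prod unitMeasure) := by
  have hV := hW.comp hσ.measurePreserving.measurable
  have hV' := hW'.comp hσ'.measurePreserving.measurable
  have hint : Integrable (fun p : ℝ × ℝ => g (W (σ p.1) (σ p.2)) *
      (W (σ p.1) (σ p.2) - W' (σ' p.1) (σ' p.2))) (unitMeasure.prod unitMeasure) :=
    (hV.integrable_comp hg).mul_bdd (hV.2.1.sub hV'.2.1).aestronglyMeasurable
      (ae_of_all _ fun p => hW.norm_sub_le_one hW' _ _ _ _)
  rw [← integral_comp_of_measurePreserving hσ.measurePreserving_prodMap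
      (hW.integrable_comp hφ).aestronglyMeasurable,
    ← integral_comp_of_measurePreserving hσ'.measurePreserving_prodMap
      (hW'.integrable_comp hφ).aestronglyMeasurable]
  simp only [Prod.map_fst, Prod.map_snd]
  rw [← integral_sub (hV.integrable_comp hφ) hint]
  refine integral_mono (hV'.integrable_comp hφ) ((hV.integrable_comp hφ).sub hint) fun p => ?_
  linarith [htangent _ (hV.2.2 p.1 p.2) _ (hV'.2.2 p.1 p.2)]

theorem integral_comp_le_of_deltaCut_eq_zero (hW : IsGraphon W) (hW' : IsGraphon W')
    (hφ : Continuous φ) (hg : Continuous g)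
    (htangent : ∀ u ∈ Icc (0 : ℝ) 1, ∀ v ∈ Icc (0 : ℝ) 1, φ v ≤ φ u + g u * (v - u))
    (h : deltaCut W W' = 0) :
    ∫ p, φ (W' p.1 p.2) ∂(unitMeasure.prod unitMeasure) ≤
      ∫ p, φ (W p.1 p.2) ∂(unitMeasure.prod unitMeasure) := by
  obtain ⟨σ₁, σ₂, hσ₁, hσ₂, hlim⟩ := exists_seq_tendsto_cutNorm h
  set U : ℕ → ℝ → ℝ → ℝ := fun n x y => W (σ₁ n x) (σ₁ n y) - W' (σ₂ n x) (σ₂ n y)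
  have hUm : ∀ n, Measurable fun p : ℝ × ℝ => U n p.1 p.2 := fun n =>
    (hW.comp (hσ₁ n).measurePreserving.measurable).2.1.sub
      (hW'.comp (hσ₂ n).measurePreserving.measurable).2.1
  have hU : ∀ n x y, ‖U n x y‖ ≤ 1 := fun n x y => hW.norm_sub_le_one hW' _ _ _ _
  have hcorr : Tendsto (fun n => ∫ p, g (W (σ₁ n p.1) (σ₁ n p.2)) * U n p.1 p.2
      ∂(unitMeasure.prod unitMeasure)) atTop (nhds 0) :=
    tendsto_integral_comp_mul (C := 1) (fun n => (hσ₁ n).measurePreserving_prodMap)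
      (fun n => (hUm n).aestronglyMeasurable)
      (fun n p => hU n p.1 p.2)
      (fun B hB => tendsto_setIntegral_preimage_of_tendsto_cutNorm hσ₁ hUm hU hlim hB)
      (hW.integrable_comp hg)
  have hbound := hcorr.const_sub (∫ p, φ (W p.1 p.2) ∂(unitMeasure.prod unitMeasure))
  rw [sub_zero] at hbound
  exact ge_of_tendsto' hbound fun n =>
    hW.integral_comp_le_sub_integral_mul hW' hφ hg htangent (hσ₁ n) (hσ₂ n)

end Tangent

theorem integral_mul_one_sub_le_of_deltaCut_eq_zero (hW : IsGraphon W) (hW' : IsGraphon W')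
    (h : deltaCut W W' = 0) :
    ∫ p, W' p.1 p.2 * (1 - W' p.1 p.2) ∂(unitMeasure.prod unitMeasure) ≤
      ∫ p, W p.1 p.2 * (1 - W p.1 p.2) ∂(unitMeasure.prod unitMeasure) :=
  hW.integral_comp_le_of_deltaCut_eq_zero hW' (φ := fun x => x * (1 - x))
    (g := fun x => 1 - 2 * x) (by fun_prop) (by fun_prop)
    (fun u _ v _ => by linarith [sq_nonneg (v - u)]) h

end IsGraphon

section Rearrangement

section Gluing

variable {X Y ι : Type*} [MeasurableSpace X] [MeasurableSpace Y] [Countable ι]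
  [MeasurableSpace ι] [MeasurableSingletonClass ι] {μ : Measure X} {ν : Measure Y}

theorem sum_restrict_preimage_singleton {d : X → ι} (hd : Measurable d) :
    Measure.sum (fun i => μ.restrict (d ⁻¹' {i})) = μ := by
  have hunion : ⋃ i, d ⁻¹' {i} = univ := by
    ext x
    simp
  rw [← Measure.restrict_iUnion (pairwise_disjoint_fiber d)
    fun i => hd (measurableSet_singleton i), hunion, Measure.restrict_univ]

theorem exists_measurePreserving_of_map_restrict {d : X → ι} {c : Y → ι} (hd : Measurable d)
    (hc : Measurable c) (h : ∀ i, ∃ g : X → Y, Measurable g ∧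
      (μ.restrict (d ⁻¹' {i})).map g = ν.restrict (c ⁻¹' {i})) :
    ∃ σ : X → Y, MeasurePreserving σ μ ν ∧ ∀ᵐ x ∂μ, c (σ x) = d x := by
  choose g hg hmap using h
  have hσ : Measurable fun x => g (d x) x :=
    (measurable_from_prod_countable_right (f := fun q : ι × X => g q.1 q.2) hg).comp
      (hd.prodMk measurable_id)
  have hfiber : ∀ i, ∀ᵐ x ∂μ.restrict (d ⁻¹' {i}), d x = i := fun i =>
    ae_restrict_mem (hd (measurableSet_singleton i))
  have hmapσ : ∀ i, (μ.restrict (d ⁻¹' {i})).map (fun x => g (d x) x) =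
      ν.restrict (c ⁻¹' {i}) := fun i => by
    rw [← hmap i]
    refine Measure.map_congr ?_
    filter_upwards [hfiber i] with x hx
    rw [hx]
  refine ⟨fun x => g (d x) x, ⟨hσ, ?_⟩, ?_⟩
  · rw [← sum_restrict_preimage_singleton (μ := μ) hd, Measure.map_sum hσ.aemeasurable]
    simp only [hmapσ, sum_restrict_preimage_singleton hc]
  · rw [← sum_restrict_preimage_singleton (μ := μ) hd, Measure.ae_sum_iff]
    intro i
    have hclass : ∀ᵐ y ∂(μ.restrict (d ⁻¹' {i})).map (fun x => g (d x) x), c y = i := by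
      rw [hmapσ]
      exact ae_restrict_mem (hc (measurableSet_singleton i))
    filter_upwards [ae_of_ae_map hσ.aemeasurable hclass, hfiber i] with x hx hxi
    rw [hx, hxi]

end Gluing

theorem unitMeasure_eq_restrict_Ioc : unitMeasure = volume.restrict (Ioc 0 1) :=
  (Measure.restrict_congr_set Ioc_ae_eq_Icc).symm

theorem ae_mem_Ioc : ∀ᵐ x ∂unitMeasure, x ∈ Ioc (0 : ℝ) 1 := by
  rw [unitMeasure_eq_restrict_Ioc]
  exact ae_restrict_mem measurableSet_Ioc

section Interval

variable {a b : ℝ}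

theorem map_volume_restrict_Ioc (hab : a < b) :
    (volume.restrict (Ioc a b)).map (fun x => (b - a)⁻¹ * (x - a)) =
      ENNReal.ofReal (b - a) • unitMeasure := by
  have hpos : 0 < b - a := sub_pos.2 hab
  have hmeas : Measurable fun x => (b - a)⁻¹ * (x - a) := by fun_prop
  have hpre : Ioc a b = (fun x => (b - a)⁻¹ * (x - a)) ⁻¹' Ioc 0 1 := by
    ext x
    simp [hpos, inv_mul_le_iff₀]
  have hvol : volume.map (fun x => (b - a)⁻¹ * (x - a)) = ENNReal.ofReal (b - a) • volume := by
    have hcomp : (fun x => (b - a)⁻¹ * (x - a)) = (fun x => (b - a)⁻¹ * x) ∘ fun x => x - a := rfl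
    rw [hcomp, ← Measure.map_map (by fun_prop) (by fun_prop),
      (measurePreserving_sub_right volume a).map_eq,
      Real.map_volume_mul_left (inv_pos.2 hpos).ne', inv_inv, abs_of_pos hpos]
  rw [hpre, ← Measure.restrict_map hmeas measurableSet_Ioc, hvol, Measure.restrict_smul,
    unitMeasure_eq_restrict_Ioc]

variable {Y : Type*} [MeasurableSpace Y] [StandardBorelSpace Y] (ν : Measure Y)

theorem exists_map_unitMeasure_eq [IsProbabilityMeasure ν] :
    ∃ g : ℝ → Y, Measurable g ∧ unitMeasure.map g = ν := by
  have : Nonempty Y := ν.nonempty_of_neZero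
  obtain ⟨g, hg, hgν⟩ := Measure.exists_measurable_map_eq ν
  have hproj : Measurable (projIcc (0 : ℝ) 1 zero_le_one) := continuous_projIcc.measurable
  refine ⟨g ∘ projIcc 0 1 zero_le_one, hg.comp hproj, ?_⟩
  have hval : unitMeasure = (volume : Measure (Icc (0 : ℝ) 1)).map Subtype.val :=
    (map_comap_subtype_coe measurableSet_Icc _).symm
  rw [hval, Measure.map_map (hg.comp hproj) measurable_subtype_coe, ← hgν]
  congr 1
  ext u
  simp

theorem exists_map_restrict_Ioc_eq (hab : a < b) (hν : ν univ = ENNReal.ofReal (b - a)) :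
    ∃ g : ℝ → Y, Measurable g ∧ (volume.restrict (Ioc a b)).map g = ν := by
  set m := ENNReal.ofReal (b - a)
  have hm0 : m ≠ 0 := (ENNReal.ofReal_pos.2 (sub_pos.2 hab)).ne'
  have hm : m ≠ ⊤ := ENNReal.ofReal_ne_top
  have : IsProbabilityMeasure (m⁻¹ • ν) :=
    ⟨by rw [Measure.smul_apply, hν, smul_eq_mul, ENNReal.inv_mul_cancel hm0 hm]⟩
  obtain ⟨g, hg, hgν⟩ := exists_map_unitMeasure_eq (m⁻¹ • ν)
  refine ⟨g ∘ fun x => (b - a)⁻¹ * (x - a), hg.comp (by fun_prop), ?_⟩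
  rw [← Measure.map_map hg (by fun_prop), map_volume_restrict_Ioc hab, Measure.map_smul, hgν,
    smul_smul, ENNReal.mul_inv_cancel hm0 hm, one_smul]

end Interval

theorem exists_isMPSelf_ae_eq {σ : ℝ → ℝ} (hσ : MeasurePreserving σ unitMeasure unitMeasure) :
    ∃ σ' : ℝ → ℝ, IsMPSelf σ' ∧ σ' =ᵐ[unitMeasure] σ := by
  have hae : (fun x => (projIcc (0 : ℝ) 1 zero_le_one (σ x) : ℝ)) =ᵐ[unitMeasure] σ := by
    filter_upwards [hσ.quasiMeasurePreserving.ae (ae_restrict_mem measurableSet_Icc)] with x hx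
    rw [projIcc_of_mem _ hx]
  have hmeas : Measurable fun x => (projIcc (0 : ℝ) 1 zero_le_one (σ x) : ℝ) :=
    (continuous_subtype_val.comp continuous_projIcc).measurable.comp hσ.measurable
  exact ⟨_, ⟨⟨hmeas, (Measure.map_congr hae).trans hσ.map_eq⟩, fun x _ => Subtype.prop _⟩, hae⟩

section Blocks

/-- The index `i` of the block `(i/r, (i+1)/r]` containing `x ∈ (0,1]`, with blocks indexed
from `0`; the value is irrelevant for other `x`. -/
def blockIndex (r : ℕ) [NeZero r] (x : ℝ) : Fin r := Fin.ofNat r (⌈r * x⌉₊ - 1)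

variable {r : ℕ}

theorem measurableSet_Er : MeasurableSet (Er r) :=
  .iUnion fun _ => .iUnion fun _ => .iUnion fun _ => measurableSet_Ioc.prod measurableSet_Ioc

theorem swap_mem_Er {x y : ℝ} (h : (x, y) ∈ Er r) : (y, x) ∈ Er r := by
  simp only [Er, mem_iUnion, mem_prod] at h ⊢
  obtain ⟨i, j, hij, hx, hy⟩ := h
  exact ⟨j, i, hij.symm, hy, hx⟩

open Classical in
theorem exists_mem_Rset_ae_eq {V : ℝ → ℝ → ℝ} (hV : IsGraphon V)
    {μ : Measure (ℝ × ℝ)} (h : ∀ᵐ p ∂μ, (p ∈ Er r → V p.1 p.2 = 1 / 2) ∧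
      (p ∉ Er r → V p.1 p.2 = 0 ∨ V p.1 p.2 = 1)) :
    ∃ W' ∈ Rset r, ∀ᵐ p ∂μ, V p.1 p.2 = W' p.1 p.2 := by
  refine ⟨fun x y => if (x, y) ∈ Er r then 1 / 2 else if V x y = 1 then 1 else 0,
    ⟨⟨fun x y => ?_, ?_, fun x y => ?_⟩, fun p hp => if_pos hp, fun p hp => ?_⟩, ?_⟩
  · have hswap : (x, y) ∈ Er r ↔ (y, x) ∈ Er r := ⟨swap_mem_Er, swap_mem_Er⟩
    simp only [hswap, hV.1 x y]
  · exact .ite measurableSet_Er measurable_const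
      (.ite (hV.2.1 (measurableSet_singleton 1)) measurable_const measurable_const)
  · dsimp only
    split_ifs <;> norm_num
  · dsimp only
    rw [if_neg hp.2]
    split_ifs <;> simp
  · filter_upwards [h] with p ⟨hon, hoff⟩
    split_ifs with hp hone
    exacts [hon hp, hone, (hoff hp).resolve_right hone]

theorem Ioc_block_subset (i : Fin r) : Ioc ((i : ℝ) / r) ((i + 1) / r) ⊆ Ioc 0 1 := by
  refine Ioc_subset_Ioc (by positivity) (div_le_one_of_le₀ ?_ r.cast_nonneg)
  exact_mod_cast i.isLt

theorem block_length (i : Fin r) : ((i : ℝ) + 1) / r - i / r = 1 / r := by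
  ring

variable [NeZero r]

theorem measurable_blockIndex : Measurable (blockIndex r) :=
  (measurable_of_countable fun n : ℕ => Fin.ofNat r (n - 1)).comp
    (Nat.measurable_ceil.comp (measurable_const_mul _))

theorem blockIndex_eq_iff {x : ℝ} (hx : x ∈ Ioc (0 : ℝ) 1) {i : Fin r} :
    blockIndex r x = i ↔ x ∈ Ioc ((i : ℝ) / r) ((i + 1) / r) := by
  have hr : (0 : ℝ) < r := Nat.cast_pos.2 (NeZero.pos r)
  have hpos : 0 < ⌈r * x⌉₊ := Nat.ceil_pos.2 (mul_pos hr hx.1)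
  have hle : ⌈r * x⌉₊ ≤ r := Nat.ceil_le.2 (mul_le_of_le_one_right hr.le hx.2)
  calc blockIndex r x = i ↔ ⌈r * x⌉₊ = (i : ℕ) + 1 := by
        rw [blockIndex, Fin.ext_iff, Fin.val_ofNat, Nat.mod_eq_of_lt (by omega)]
        omega
    _ ↔ x ∈ Ioc ((i : ℝ) / r) ((i + 1) / r) := by
        rw [Nat.ceil_eq_iff (Nat.succ_ne_zero _), mem_Ioc, div_lt_iff₀' hr, le_div_iff₀' hr]
        simp

theorem unitMeasure_restrict_blockIndex (i : Fin r) :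
    unitMeasure.restrict (blockIndex r ⁻¹' {i}) =
      volume.restrict (Ioc ((i : ℝ) / r) ((i + 1) / r)) := by
  rw [unitMeasure_eq_restrict_Ioc,
    Measure.restrict_restrict (measurable_blockIndex (measurableSet_singleton i))]
  congr 1
  ext x
  exact ⟨fun ⟨hi, hx⟩ => (blockIndex_eq_iff hx).1 hi,
    fun hi => ⟨(blockIndex_eq_iff (Ioc_block_subset i hi)).2 hi, Ioc_block_subset i hi⟩⟩

theorem mem_Er_iff {x y : ℝ} (hx : x ∈ Ioc (0 : ℝ) 1) (hy : y ∈ Ioc (0 : ℝ) 1) :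
    (x, y) ∈ Er r ↔ blockIndex r x ≠ blockIndex r y := by
  simp only [Er, mem_iUnion, mem_prod, ← blockIndex_eq_iff hx, ← blockIndex_eq_iff hy]
  simp

theorem ae_mem_Er_iff : ∀ᵐ p ∂(unitMeasure.prod unitMeasure),
    p ∈ Er r ↔ blockIndex r p.1 ≠ blockIndex r p.2 := by
  filter_upwards [Measure.quasiMeasurePreserving_fst.ae ae_mem_Ioc,
    Measure.quasiMeasurePreserving_snd.ae ae_mem_Ioc] with p h₁ h₂
  exact mem_Er_iff h₁ h₂

theorem unitMeasure_real_blockIndex (i : Fin r) :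
    unitMeasure.real (blockIndex r ⁻¹' {i}) = 1 / r := by
  rw [← measureReal_restrict_apply_univ, unitMeasure_restrict_blockIndex,
    measureReal_restrict_apply_univ, Real.volume_real_Ioc, block_length]
  exact max_eq_left (by positivity)

theorem exists_isMPSelf_ae_eq_blockIndex {c : ℝ → Fin r} (hc : Measurable c)
    (hclass : ∀ i, unitMeasure.real (c ⁻¹' {i}) = 1 / r) :
    ∃ σ : ℝ → ℝ, IsMPSelf σ ∧ ∀ᵐ x ∂unitMeasure, c (σ x) = blockIndex r x := by
  have hr : (0 : ℝ) < 1 / r := one_div_pos.2 (Nat.cast_pos.2 (NeZero.pos r))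
  obtain ⟨σ, hσ, hcσ⟩ := exists_measurePreserving_of_map_restrict (μ := unitMeasure)
    (ν := unitMeasure) (measurable_blockIndex (r := r)) hc fun i => by
      rw [unitMeasure_restrict_blockIndex]
      refine exists_map_restrict_Ioc_eq _ (sub_pos.1 (by rwa [block_length])) ?_
      rw [block_length, ← hclass i, Measure.restrict_apply_univ, ofReal_measureReal]
  obtain ⟨σ', hσ', hae⟩ := exists_isMPSelf_ae_eq hσ
  refine ⟨σ', hσ', ?_⟩
  filter_upwards [hcσ, hae] with x hx hx'
  rw [hx', hx]

end Blocks

end Rearrangement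

section EntropyProfile

open IsMeasurableGraph

/-- The properties of the binary entropy that determine the extremal problem; the quadratic
`4x(1-x)` has them as well. -/
structure IsEntropyProfile (φ : ℝ → ℝ) : Prop where
  continuous : Continuous φ
  apply_zero : φ 0 = 0
  apply_one : φ 1 = 0
  le_one : ∀ x, φ x ≤ 1
  eq_one_iff : ∀ x, φ x = 1 ↔ x = 1 / 2

theorem isEntropyProfile_binEnt : IsEntropyProfile binEnt := by
  have hbin : binEnt = fun x => Real.binEntropy x / Real.log 2 := by
    ext x
    simp only [binEnt, Real.binEntropy, Real.logb, Real.log_inv]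
    ring
  have hlog : 0 < Real.log 2 := Real.log_pos one_lt_two
  rw [hbin]
  refine ⟨Real.binEntropy_continuous.div_const _, by simp, by simp, fun x => ?_, fun x => ?_⟩
  · exact (div_le_one hlog).2 Real.binEntropy_le_log_two
  · rw [div_eq_one_iff_eq hlog.ne', Real.binEntropy_eq_log_two, one_div]

theorem isEntropyProfile_quadratic : IsEntropyProfile fun x => 4 * (x * (1 - x)) where
  continuous := by fun_prop
  apply_zero := by simp
  apply_one := by simp
  le_one x := by linarith [sq_nonneg (2 * x - 1)]
  eq_one_iff x := by
    have hsq : 4 * (x * (1 - x)) = 1 ↔ (2 * x - 1) ^ 2 = 0 := by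
      constructor <;> intro h <;> linarith
    rw [hsq, sq_eq_zero_iff, sub_eq_zero, eq_div_iff two_ne_zero, mul_comm]

/-- The adjacency relation of the randomness support graphon of `W`. -/
def randAdj (W : ℝ → ℝ → ℝ) (x y : ℝ) : Prop := 0 < W x y ∧ W x y < 1

theorem KFree.cliqueFree_randAdj {W : ℝ → ℝ → ℝ} {n : ℕ} (h : KFree n (randIndicator W)) :
    CliqueFree n unitMeasure (randAdj W) := by
  rw [KFree, volume_pi, Measure.restrict_pi_pi] at h
  filter_upwards [h] with x hx
  obtain ⟨i, -, hi⟩ := Finset.prod_eq_zero_iff.1 hx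
  obtain ⟨j, -, hij⟩ := Finset.prod_eq_zero_iff.1 hi
  by_cases hlt : i < j
  · refine ⟨i, j, hlt, fun hadj => ?_⟩
    exact one_ne_zero ((if_pos hadj).symm.trans ((if_pos hlt).symm.trans hij))
  · rw [if_neg hlt] at hij
    exact absurd hij one_ne_zero

namespace IsGraphon

variable {W : ℝ → ℝ → ℝ}

theorem graphonEnt_eq (hW : IsGraphon W) :
    graphonEnt W = ∫ p, binEnt (W p.1 p.2) ∂(unitMeasure.prod unitMeasure) := by
  rw [integral_prod _ (hW.integrable_comp isEntropyProfile_binEnt.continuous)]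
  rfl

theorem isMeasurableGraph_randAdj (hW : IsGraphon W) : IsMeasurableGraph (randAdj W) where
  symm {x y} h := by rwa [randAdj, hW.1 y x]
  measurableSet := (measurableSet_lt measurable_const hW.2.1).inter
    (measurableSet_lt hW.2.1 measurable_const)

theorem eq_zero_or_eq_one_of_not_randAdj (hW : IsGraphon W) {x y : ℝ} (h : ¬randAdj W x y) :
    W x y = 0 ∨ W x y = 1 := by
  obtain ⟨h0, h1⟩ := hW.2.2 x y
  rcases h0.eq_or_lt with h0 | h0
  · exact .inl h0.symm
  · exact .inr (h1.antisymm (not_lt.1 fun hlt => h ⟨h0, hlt⟩))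

end IsGraphon

theorem unitMeasure_prod_real_Er {r : ℕ} [NeZero r] :
    (unitMeasure.prod unitMeasure).real (Er r) = 1 - 1 / r := by
  rw [← edgeMass_ne (μ := unitMeasure) measurable_blockIndex unitMeasure_real_blockIndex, edgeMass]
  refine measureReal_congr ?_
  filter_upwards [ae_mem_Er_iff (r := r)] with p hp
  exact propext hp

namespace IsEntropyProfile

variable {φ : ℝ → ℝ} {W : ℝ → ℝ → ℝ}

theorem apply_eq_zero (hφ : IsEntropyProfile φ) {x : ℝ} (hx : x = 0 ∨ x = 1) : φ x = 0 := by
  rcases hx with rfl | rfl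
  exacts [hφ.apply_zero, hφ.apply_one]

theorem comp_le_indicator (hφ : IsEntropyProfile φ) (hW : IsGraphon W) (p : ℝ × ℝ) :
    φ (W p.1 p.2) ≤ (edgeSet (randAdj W)).indicator 1 p := by
  by_cases hp : p ∈ edgeSet (randAdj W)
  · rw [indicator_of_mem hp]
    exact hφ.le_one _
  · rw [indicator_of_notMem hp, hφ.apply_eq_zero (hW.eq_zero_or_eq_one_of_not_randAdj hp)]

theorem comp_eq_indicator_iff (hφ : IsEntropyProfile φ) (hW : IsGraphon W) (p : ℝ × ℝ) :
    φ (W p.1 p.2) = (edgeSet (randAdj W)).indicator 1 p ↔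
      (randAdj W p.1 p.2 → W p.1 p.2 = 1 / 2) := by
  by_cases hp : p ∈ edgeSet (randAdj W)
  · rw [indicator_of_mem hp, Pi.one_apply, hφ.eq_one_iff]
    exact ⟨fun h _ => h, fun h => h hp⟩
  · rw [indicator_of_notMem hp, hφ.apply_eq_zero (hW.eq_zero_or_eq_one_of_not_randAdj hp)]
    exact iff_of_true rfl fun hadj => absurd hadj hp

theorem integral_le_edgeMass (hφ : IsEntropyProfile φ) (hW : IsGraphon W) :
    ∫ p, φ (W p.1 p.2) ∂(unitMeasure.prod unitMeasure) ≤ edgeMass unitMeasure (randAdj W) := by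
  have hmeas := hW.isMeasurableGraph_randAdj.measurableSet_edgeSet
  rw [edgeMass, ← integral_indicator_one hmeas]
  exact integral_mono (hW.integrable_comp hφ.continuous)
    ((integrable_const (1 : ℝ)).indicator hmeas) (hφ.comp_le_indicator hW)

theorem integral_eq_edgeMass_iff (hφ : IsEntropyProfile φ) (hW : IsGraphon W) :
    ∫ p, φ (W p.1 p.2) ∂(unitMeasure.prod unitMeasure) = edgeMass unitMeasure (randAdj W) ↔
      ∀ᵐ p ∂(unitMeasure.prod unitMeasure), randAdj W p.1 p.2 → W p.1 p.2 = 1 / 2 := by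
  have hmeas := hW.isMeasurableGraph_randAdj.measurableSet_edgeSet
  rw [edgeMass, ← integral_indicator_one hmeas,
    integral_eq_iff_of_ae_le (hW.integrable_comp hφ.continuous)
      (g := (edgeSet (randAdj W)).indicator 1) ((integrable_const (1 : ℝ)).indicator hmeas)
      (ae_of_all _ (hφ.comp_le_indicator hW))]
  exact eventually_congr (ae_of_all _ (hφ.comp_eq_indicator_iff hW))

section CliqueFree

variable {k : ℕ}

theorem integral_le (hφ : IsEntropyProfile φ) (hW : IsGraphon W)
    (hfree : CliqueFree (k + 2) unitMeasure (randAdj W)) :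
    ∫ p, φ (W p.1 p.2) ∂(unitMeasure.prod unitMeasure) ≤ 1 - 1 / (k + 1) :=
  (hφ.integral_le_edgeMass hW).trans (hfree.edgeMass_le hW.isMeasurableGraph_randAdj)

theorem integral_eq_iff (hφ : IsEntropyProfile φ) (hW : IsGraphon W)
    (hfree : CliqueFree (k + 2) unitMeasure (randAdj W)) :
    ∫ p, φ (W p.1 p.2) ∂(unitMeasure.prod unitMeasure) = 1 - 1 / (k + 1) ↔
      edgeMass unitMeasure (randAdj W) = 1 - 1 / (k + 1) ∧
        ∀ᵐ p ∂(unitMeasure.prod unitMeasure), randAdj W p.1 p.2 → W p.1 p.2 = 1 / 2 := by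
  have hle := hφ.integral_le_edgeMass hW
  have hmass := hfree.edgeMass_le hW.isMeasurableGraph_randAdj
  rw [← hφ.integral_eq_edgeMass_iff hW]
  constructor
  · intro h
    have hext := hmass.antisymm (h.symm.le.trans hle)
    exact ⟨hext, h.trans hext.symm⟩
  · rintro ⟨hext, h⟩
    exact h.trans hext

end CliqueFree

theorem integral_of_mem_Rset {r : ℕ} [NeZero r] (hφ : IsEntropyProfile φ) (hW : W ∈ Rset r) :
    ∫ p, φ (W p.1 p.2) ∂(unitMeasure.prod unitMeasure) = 1 - 1 / r := by
  rw [← unitMeasure_prod_real_Er, ← integral_indicator_one measurableSet_Er]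
  refine integral_congr_ae ?_
  rw [unitMeasure_prod_unitMeasure]
  filter_upwards [ae_restrict_mem (measurableSet_Icc.prod measurableSet_Icc)] with p hp
  by_cases hE : p ∈ Er r
  · rw [indicator_of_mem hE, Pi.one_apply, hφ.eq_one_iff]
    exact hW.2.1 p hE
  · rw [indicator_of_notMem hE, hφ.apply_eq_zero (hW.2.2 p ⟨hp, hE⟩)]

end IsEntropyProfile

theorem IsGraphon.exists_mem_Rset_deltaCut_eq_zero {W : ℝ → ℝ → ℝ} (hW : IsGraphon W) {k : ℕ}
    (hfree : CliqueFree (k + 2) unitMeasure (randAdj W))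
    (hmass : edgeMass unitMeasure (randAdj W) = 1 - 1 / (k + 1))
    (hhalf : ∀ᵐ p ∂(unitMeasure.prod unitMeasure), randAdj W p.1 p.2 → W p.1 p.2 = 1 / 2) :
    ∃ W' ∈ Rset (k + 1), deltaCut W W' = 0 := by
  obtain ⟨c, hc, hclass, hadj⟩ := hfree.exists_multipartite hW.isMeasurableGraph_randAdj hmass
  obtain ⟨σ, hσ, hcσ⟩ := exists_isMPSelf_ae_eq_blockIndex hc (by exact_mod_cast hclass)
  have hσσ := hσ.measurePreserving_prodMap.quasiMeasurePreserving
  obtain ⟨W', hW', hae⟩ := exists_mem_Rset_ae_eq (r := k + 1)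
    (μ := unitMeasure.prod unitMeasure) (hW.comp hσ.measurePreserving.measurable) <| by
      filter_upwards [hσσ.ae hhalf, hσσ.ae hadj, ae_mem_Er_iff (r := k + 1),
        Measure.quasiMeasurePreserving_fst.ae hcσ,
        Measure.quasiMeasurePreserving_snd.ae hcσ] with p hhalf hadj hE h₁ h₂
      simp only [Prod.map_fst, Prod.map_snd, h₁, h₂, ← hE] at hadj
      exact ⟨fun hp => hhalf (hadj.2 hp), fun hp =>
        hW.eq_zero_or_eq_one_of_not_randAdj (mt hadj.1 hp)⟩
  exact ⟨W', hW', deltaCut_eq_zero_of_ae_eq hσ hae⟩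

theorem IsGraphon.integral_quadratic_eq_of_deltaCut_eq_zero {W W' : ℝ → ℝ → ℝ} (hW : IsGraphon W)
    {k : ℕ} (hfree : CliqueFree (k + 2) unitMeasure (randAdj W)) (hW' : W' ∈ Rset (k + 1))
    (h : deltaCut W W' = 0) :
    ∫ p, 4 * (W p.1 p.2 * (1 - W p.1 p.2)) ∂(unitMeasure.prod unitMeasure) = 1 - 1 / (k + 1) := by
  refine (isEntropyProfile_quadratic.integral_le hW hfree).antisymm ?_
  have hvalue := isEntropyProfile_quadratic.integral_of_mem_Rset hW'
  have hle := hW.integral_mul_one_sub_le_of_deltaCut_eq_zero hW'.1 h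
  push_cast at hvalue
  rw [← hvalue, integral_const_mul, integral_const_mul]
  linarith

end EntropyProfile

/-- Lemma 7.3: if the randomness support graphon of `W` is
`K_{r+1}`-free, then `Ent(W) ≤ 1 - 1/r`, with equality iff `W` is equivalent to a
graphon in `R_r`. -/
theorem stmt15 (r : ℕ) (hr : 1 ≤ r) (W : ℝ → ℝ → ℝ) (hW : IsGraphon W)
    (hfree : KFree (r + 1) (randIndicator W)) :
    graphonEnt W ≤ 1 - 1 / (r : ℝ) ∧
      (graphonEnt W = 1 - 1 / (r : ℝ) ↔ ∃ W' ∈ Rset r, deltaCut W W' = 0) := by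
  obtain ⟨k, rfl⟩ := Nat.exists_eq_add_of_le' hr
  have hclique := hfree.cliqueFree_randAdj
  have hent := isEntropyProfile_binEnt.integral_eq_iff hW hclique
  have hquad := isEntropyProfile_quadratic.integral_eq_iff hW hclique
  rw [hW.graphonEnt_eq]
  push_cast
  refine ⟨isEntropyProfile_binEnt.integral_le hW hclique, fun h => ?_, fun ⟨W', hW', h⟩ => ?_⟩
  · obtain ⟨hmass, hhalf⟩ := hent.1 h
    exact hW.exists_mem_Rset_deltaCut_eq_zero hclique hmass hhalf
  · exact hent.2 (hquad.1 (hW.integral_quadratic_eq_of_deltaCut_eq_zero hclique hW' h))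

end
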